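/- Let ρ > 0 and σ > 0, define m(λ) = ρσ · ∫_0^∞ ln(1 + sinh²(λ/(2ρ))·erfc(η)·erfc(−η)) dη and φ_q(ξ) = sup_{λ∈ℝ} (λξ − m(λ)). Then lim_{ξ→∞} φ_q(ξ)/ξ³ = ρ/(3σ²). -/

import Mathlib

open MeasureTheory Real Filter Topology

/-- The complementary error function `erfc(x) = (2/√π) ∫_x^∞ e^{−u²} du`. -/
noncomputable def erfc (x : ℝ) : ℝ := (2 / Real.sqrt π) * ∫ u in Set.Ioi x, Real.exp (-u ^ 2)

/-- The quenched cumulant generating function per unit `√t`: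
`m(λ) = ρσ ∫_0^∞ ln(1 + sinh²(λ/(2ρ))·erfc(η)·erfc(−η)) dη`. -/
noncomputable def mq (ρ σ l : ℝ) : ℝ :=
  ρ * σ * ∫ η in Set.Ioi (0 : ℝ),
    Real.log (1 + Real.sinh (l / (2 * ρ)) ^ 2 * erfc η * erfc (-η))

/-- The quenched large deviation function `φ_q(ξ) = sup_λ (λξ − m(λ))`. -/
noncomputable def φq (ρ σ ξ : ℝ) : ℝ := ⨆ l : ℝ, (l * ξ - mq ρ σ l)

/-!
Rescaling reduces the claim to `ρ = σ = 1`. There the integrand of `mq 1 1 l` is close to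
`log (1 + exp (|l| - η ^ 2))`, hence to `max (|l| - η ^ 2) 0`, whose integral over `η > 0` is
`2 / 3 * |l| ^ (3 / 2)`; its Legendre transform at `x ≥ 0` is `x ^ 3 / 3`.
The upper bound on the Legendre transform needs only a lower bound on `mq 1 1 l` that is affine in
`|l|`: integrating a lower bound on the integrand over `0 < η ≤ x` gives one of slope exactly `x`.
-/

section Gaussian

lemma integrable_exp_neg_sq : Integrable (fun u : ℝ => exp (-u ^ 2)) := by
  simpa using integrable_exp_neg_mul_sq (b := 1) one_pos

lemma integral_exp_neg_sq : ∫ u : ℝ, exp (-u ^ 2) = √π := by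
  simpa using integral_gaussian 1

lemma integral_Ioi_exp_neg_sq : ∫ u in Set.Ioi (0 : ℝ), exp (-u ^ 2) = √π / 2 := by
  simpa using integral_gaussian_Ioi 1

end Gaussian

section Erfc

lemma erfc_nonneg (x : ℝ) : 0 ≤ erfc x :=
  mul_nonneg (by positivity) (integral_nonneg fun _ => (exp_pos _).le)

lemma erfc_antitone : Antitone erfc := fun x y hxy =>
  mul_le_mul_of_nonneg_left
    (setIntegral_mono_set integrable_exp_neg_sq.integrableOn (ae_of_all _ fun _ => (exp_pos _).le)
      (Set.Ioi_subset_Ioi hxy).eventuallyLE)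
    (by positivity)

lemma erfc_add_erfc_neg (x : ℝ) : erfc x + erfc (-x) = 2 := by
  have reflect : ∫ u in Set.Ioi (-x), exp (-u ^ 2) = ∫ u in Set.Iic x, exp (-u ^ 2) := by
    rw [← integral_comp_neg_Iic]
    simp only [neg_sq]
  have total : (∫ u in Set.Iic x, exp (-u ^ 2)) + ∫ u in Set.Ioi x, exp (-u ^ 2) = √π := by
    rw [intervalIntegral.integral_Iic_add_Ioi integrable_exp_neg_sq.integrableOn
      integrable_exp_neg_sq.integrableOn, integral_exp_neg_sq]
  rw [erfc, erfc, reflect, ← mul_add, add_comm, total]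
  exact div_mul_cancel₀ 2 (sqrt_pos.2 pi_pos).ne'

lemma erfc_le_exp_neg_sq {x : ℝ} (hx : 0 ≤ x) : erfc x ≤ exp (-x ^ 2) := by
  have shift : ∫ u in Set.Ioi x, exp (-u ^ 2) = ∫ v in Set.Ioi 0, exp (-(v + x) ^ 2) := by
    have h := (measurePreserving_add_right (volume : Measure ℝ) x).setIntegral_preimage_emb
      (measurableEmbedding_addRight x) (fun u : ℝ => exp (-u ^ 2)) (Set.Ioi x)
    simpa using h.symm
  have drop_cross_term : ∫ v in Set.Ioi 0, exp (-(v + x) ^ 2) ≤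
      ∫ v in Set.Ioi 0, exp (-x ^ 2) * exp (-v ^ 2) := by
    refine setIntegral_mono_on (integrable_exp_neg_sq.comp_add_right x).integrableOn
      (integrable_exp_neg_sq.const_mul _).integrableOn measurableSet_Ioi fun v hv => ?_
    rw [← exp_add, exp_le_exp]
    linarith [mul_nonneg (le_of_lt hv) hx, add_sq v x]
  calc erfc x = 2 / √π * ∫ v in Set.Ioi 0, exp (-(v + x) ^ 2) := by rw [erfc, shift]
    _ ≤ 2 / √π * ∫ v in Set.Ioi 0, exp (-x ^ 2) * exp (-v ^ 2) := by gcongr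
    _ = exp (-x ^ 2) := by
      rw [integral_const_mul, integral_Ioi_exp_neg_sq]
      field_simp

lemma exp_neg_add_one_sq_le_erfc {x : ℝ} (hx : 0 ≤ x) :
    2 / √π * exp (-(x + 1) ^ 2) ≤ erfc x := by
  refine mul_le_mul_of_nonneg_left ?_ (by positivity)
  calc exp (-(x + 1) ^ 2) = ∫ _ in Set.Ioc x (x + 1), exp (-(x + 1) ^ 2) := by simp
    _ ≤ ∫ u in Set.Ioc x (x + 1), exp (-u ^ 2) := by
      refine setIntegral_mono_on (by simp) integrable_exp_neg_sq.integrableOn measurableSet_Ioc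
        fun u hu => exp_le_exp.2 (neg_le_neg ?_)
      exact pow_le_pow_left₀ (hx.trans hu.1.le) hu.2 2
    _ ≤ ∫ u in Set.Ioi x, exp (-u ^ 2) :=
      setIntegral_mono_set integrable_exp_neg_sq.integrableOn (ae_of_all _ fun _ => (exp_pos _).le)
        Set.Ioc_subset_Ioi_self.eventuallyLE

lemma erfc_mul_erfc_neg_nonneg (x : ℝ) : 0 ≤ erfc x * erfc (-x) :=
  mul_nonneg (erfc_nonneg x) (erfc_nonneg (-x))

lemma erfc_mul_erfc_neg_le_one (x : ℝ) : erfc x * erfc (-x) ≤ 1 := by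
  rw [eq_sub_of_add_eq' (erfc_add_erfc_neg x)]
  linarith [sq_nonneg (erfc x - 1), sub_sq (erfc x) 1]

lemma erfc_mul_erfc_neg_le_exp {x : ℝ} (hx : 0 ≤ x) :
    erfc x * erfc (-x) ≤ 2 * exp (-x ^ 2) := by
  have erfc_neg_le_two : erfc (-x) ≤ 2 := by linarith [erfc_nonneg x, erfc_add_erfc_neg x]
  rw [mul_comm 2]
  exact mul_le_mul (erfc_le_exp_neg_sq hx) erfc_neg_le_two (erfc_nonneg _) (exp_pos _).le

lemma exp_le_erfc_mul_erfc_neg {x : ℝ} (hx : 0 ≤ x) :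
    2 / √π * exp (-(x + 1) ^ 2) ≤ erfc x * erfc (-x) := by
  have erfc_le_one : erfc x ≤ 1 :=
    (erfc_le_exp_neg_sq hx).trans (exp_le_one_iff.2 (neg_nonpos.2 (sq_nonneg x)))
  have one_le_erfc_neg : 1 ≤ erfc (-x) := by linarith [erfc_add_erfc_neg x]
  exact (exp_neg_add_one_sq_le_erfc hx).trans
    (le_mul_of_one_le_right (erfc_nonneg x) one_le_erfc_neg)

end Erfc

section Elementary

lemma four_mul_sinh_half_sq_le_exp_abs (x : ℝ) : 4 * sinh (x / 2) ^ 2 ≤ exp |x| := by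
  have hx : 4 * sinh (x / 2) ^ 2 = 2 * cosh |x| - 2 := by
    have h := cosh_two_mul (x / 2)
    rw [mul_div_cancel₀ x two_ne_zero] at h
    rw [cosh_abs]
    linarith [cosh_sq (x / 2)]
  rw [hx, cosh_eq]
  linarith [exp_le_one_iff.2 (neg_nonpos.2 (abs_nonneg x))]

lemma exp_abs_le_four_mul_cosh_half_sq (x : ℝ) : exp |x| ≤ 4 * cosh (x / 2) ^ 2 := by
  have hx : 4 * cosh (x / 2) ^ 2 = exp x + exp (-x) + 2 := by
    have h := cosh_two_mul (x / 2)
    rw [mul_div_cancel₀ x two_ne_zero, cosh_eq x] at h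
    linarith [cosh_sq (x / 2)]
  linarith [exp_abs_le x]

lemma log_one_add_le_self {x : ℝ} (hx : -1 < x) : log (1 + x) ≤ x := by
  linarith [log_le_sub_one_of_pos (neg_lt_iff_pos_add'.1 hx)]

lemma log_one_add_exp_le (a : ℝ) : log (1 + exp a) ≤ max a 0 + exp (-|a|) := by
  have log_le (b : ℝ) : log (1 + exp b) ≤ exp b :=
    log_one_add_le_self (by linarith [exp_pos b])
  rcases le_total a 0 with ha | ha
  · simpa [ha, abs_of_nonpos ha] using log_le a
  · have factor : 1 + exp a = exp a * (1 + exp (-a)) := by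
      rw [mul_add, ← exp_add, add_neg_cancel, exp_zero, mul_one, add_comm]
    rw [factor, log_mul (exp_pos a).ne' (by positivity), log_exp, max_eq_left ha, abs_of_nonneg ha]
    exact add_le_add_right (log_le (-a)) a

lemma sub_sq_le_abs_sq_sub_sq {s t : ℝ} (hs : 0 ≤ s) (ht : 0 ≤ t) :
    (t - s) ^ 2 ≤ |s ^ 2 - t ^ 2| := by
  rw [sq_sub_sq, abs_mul, abs_of_nonneg (add_nonneg hs ht), ← sq_abs, abs_sub_comm, sq]
  exact mul_le_mul_of_nonneg_right (abs_le.2 ⟨by linarith, by linarith⟩) (abs_nonneg _)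

lemma integrableOn_Ioi_max_sq_sub_sq (s : ℝ) :
    IntegrableOn (fun η => max (s ^ 2 - η ^ 2) 0) (Set.Ioi 0) := by
  refine (Continuous.integrable_of_hasCompactSupport (by fun_prop) ?_).integrableOn
  refine HasCompactSupport.intro (isCompact_Icc (a := -|s|) (b := |s|)) fun η hη => ?_
  rw [Set.mem_Icc, ← abs_le, not_le] at hη
  exact max_eq_right (sub_nonpos.2 (sq_lt_sq.2 hη).le)

lemma integral_Ioi_max_sq_sub_sq {s : ℝ} (hs : 0 ≤ s) :
    ∫ η in Set.Ioi 0, max (s ^ 2 - η ^ 2) 0 = 2 / 3 * s ^ 3 := by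
  calc ∫ η in Set.Ioi 0, max (s ^ 2 - η ^ 2) 0 = ∫ η in Set.Ioc 0 s, max (s ^ 2 - η ^ 2) 0 := by
        refine setIntegral_eq_of_subset_of_forall_sdiff_eq_zero measurableSet_Ioi
          Set.Ioc_subset_Ioi_self fun η hη => max_eq_right (sub_nonpos.2 ?_)
        have s_lt : s < η := not_le.1 fun h => hη.2 ⟨hη.1, h⟩
        exact pow_le_pow_left₀ hs s_lt.le 2
    _ = ∫ η in Set.Ioc 0 s, (s ^ 2 - η ^ 2) :=
        setIntegral_congr_fun measurableSet_Ioc fun η hη =>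
          max_eq_left (sub_nonneg.2 (pow_le_pow_left₀ hη.1.le hη.2 2))
    _ = ∫ η in (0 : ℝ)..s, (s ^ 2 - η ^ 2) := (intervalIntegral.integral_of_le hs).symm
    _ = 2 / 3 * s ^ 3 := by
        rw [intervalIntegral.integral_sub (by simp)
          (Continuous.intervalIntegrable (by fun_prop) _ _)]
        simp only [intervalIntegral.integral_const, integral_pow, smul_eq_mul]
        ring

lemma tendsto_cubic_div_pow_three (a b c d : ℝ) :
    Tendsto (fun x : ℝ => (a * x ^ 3 + b * x ^ 2 + c * x + d) / x ^ 3) atTop (𝓝 a) := by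
  have hcont : Continuous fun y : ℝ => a + b * y + c * y ^ 2 + d * y ^ 3 := by fun_prop
  have hlim := (hcont.tendsto 0).comp tendsto_inv_atTop_zero
  simp only [mul_zero, add_zero, ne_eq, OfNat.ofNat_ne_zero, not_false_eq_true, zero_pow] at hlim
  refine hlim.congr' ?_
  filter_upwards [eventually_ne_atTop 0] with x hx
  simp only [Function.comp_apply]
  field_simp

end Elementary

section CumulantGeneratingFunction

/-- The integrand of the quenched cumulant generating function in units where `ρ = σ = 1`. -/
noncomputable def cgfDensity (l η : ℝ) : ℝ :=
  log (1 + sinh (l / 2) ^ 2 * erfc η * erfc (-η))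

lemma mq_one_one (l : ℝ) : mq 1 1 l = ∫ η in Set.Ioi 0, cgfDensity l η := by
  simp only [mq, cgfDensity, mul_one, one_mul]

lemma mq_eq_mul_mq_one_one (ρ σ l : ℝ) : mq ρ σ l = ρ * σ * mq 1 1 (l / ρ) := by
  simp only [mq, mul_one, one_mul, div_div, mul_comm ρ 2]

lemma cgfDensity_nonneg (l η : ℝ) : 0 ≤ cgfDensity l η := by
  refine log_nonneg (le_add_of_nonneg_right ?_)
  rw [mul_assoc]
  exact mul_nonneg (sq_nonneg _) (erfc_mul_erfc_neg_nonneg η)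

lemma measurable_cgfDensity (l : ℝ) : Measurable (cgfDensity l) :=
  measurable_log.comp (((erfc_antitone.measurable.const_mul _).mul
    (erfc_antitone.measurable.comp measurable_neg)).const_add 1)

lemma cgfDensity_le_log_one_add_exp (l : ℝ) {η : ℝ} (hη : 0 ≤ η) :
    cgfDensity l η ≤ log (1 + exp (|l| - η ^ 2)) := by
  have product_nonneg : 0 ≤ sinh (l / 2) ^ 2 * (erfc η * erfc (-η)) :=
    mul_nonneg (sq_nonneg _) (erfc_mul_erfc_neg_nonneg η)
  have product_le : sinh (l / 2) ^ 2 * (erfc η * erfc (-η)) ≤ exp (|l| - η ^ 2) :=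
    calc sinh (l / 2) ^ 2 * (erfc η * erfc (-η))
        ≤ exp |l| / 2 * (2 * exp (-η ^ 2)) := by
          refine mul_le_mul ?_ (erfc_mul_erfc_neg_le_exp hη) (erfc_mul_erfc_neg_nonneg η)
            (by positivity)
          linarith [four_mul_sinh_half_sq_le_exp_abs l, sq_nonneg (sinh (l / 2))]
      _ = exp (|l| - η ^ 2) := by rw [sub_eq_add_neg, exp_add]; ring
  rw [cgfDensity, mul_assoc]
  exact log_le_log (by linarith) (by linarith)

lemma cgfDensity_le (l : ℝ) {η : ℝ} (hη : 0 ≤ η) :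
    cgfDensity l η ≤ max (√|l| ^ 2 - η ^ 2) 0 + exp (-(η - √|l|) ^ 2) := by
  have hl : √|l| ^ 2 = |l| := sq_sqrt (abs_nonneg l)
  calc cgfDensity l η ≤ log (1 + exp (√|l| ^ 2 - η ^ 2)) := by
        rw [hl]; exact cgfDensity_le_log_one_add_exp l hη
    _ ≤ max (√|l| ^ 2 - η ^ 2) 0 + exp (-|√|l| ^ 2 - η ^ 2|) := log_one_add_exp_le _
    _ ≤ max (√|l| ^ 2 - η ^ 2) 0 + exp (-(η - √|l|) ^ 2) := by
        gcongr
        exact sub_sq_le_abs_sq_sub_sq (sqrt_nonneg _) hη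

-- Since `erfc η * erfc (-η) ≤ 1`, the summand `1` absorbs the passage from `sinh ^ 2` to
-- `cosh ^ 2`, which is bounded below by a pure exponential.
lemma le_cgfDensity (l : ℝ) {η : ℝ} (hη : 0 ≤ η) :
    |l| - log (2 * √π) - (η + 1) ^ 2 ≤ cgfDensity l η := by
  have exp_eq : exp (|l| - log (2 * √π) - (η + 1) ^ 2) =
      exp |l| / 4 * (2 / √π * exp (-(η + 1) ^ 2)) := by
    rw [sub_eq_add_neg _ ((η + 1) ^ 2), exp_add, exp_sub, exp_log (by positivity)]
    field_simp
    norm_num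
  have exp_le : exp (|l| - log (2 * √π) - (η + 1) ^ 2) ≤
      1 + sinh (l / 2) ^ 2 * erfc η * erfc (-η) :=
    calc exp (|l| - log (2 * √π) - (η + 1) ^ 2)
        ≤ cosh (l / 2) ^ 2 * (erfc η * erfc (-η)) := by
          rw [exp_eq]
          refine mul_le_mul ?_ (exp_le_erfc_mul_erfc_neg hη) (by positivity) (sq_nonneg _)
          linarith [exp_abs_le_four_mul_cosh_half_sq l]
      _ ≤ 1 + sinh (l / 2) ^ 2 * erfc η * erfc (-η) := by
          rw [cosh_sq]
          linarith [erfc_mul_erfc_neg_le_one η]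
  exact (le_log_iff_exp_le ((exp_pos _).trans_le exp_le)).2 exp_le

lemma integrableOn_cgfDensity_majorant (s : ℝ) :
    IntegrableOn (fun η => max (s ^ 2 - η ^ 2) 0 + exp (-(η - s) ^ 2)) (Set.Ioi 0) :=
  (integrableOn_Ioi_max_sq_sub_sq s).add (integrable_exp_neg_sq.comp_sub_right s).integrableOn

lemma integrableOn_cgfDensity (l : ℝ) : IntegrableOn (cgfDensity l) (Set.Ioi 0) := by
  refine Integrable.mono' (integrableOn_cgfDensity_majorant √|l|)
    (measurable_cgfDensity l).aestronglyMeasurable ?_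
  filter_upwards [ae_restrict_mem measurableSet_Ioi] with η hη
  rw [norm_of_nonneg (cgfDensity_nonneg l η)]
  exact cgfDensity_le l (le_of_lt hη)

lemma mq_one_one_le (l : ℝ) : mq 1 1 l ≤ 2 / 3 * √|l| ^ 3 + √π := by
  have gaussian_le : ∫ η in Set.Ioi 0, exp (-(η - √|l|) ^ 2) ≤ √π := by
    rw [← integral_exp_neg_sq, ← integral_sub_right_eq_self (fun u : ℝ => exp (-u ^ 2)) √|l|]
    exact setIntegral_le_integral (integrable_exp_neg_sq.comp_sub_right _)
      (ae_of_all _ fun _ => (exp_pos _).le)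
  calc mq 1 1 l = ∫ η in Set.Ioi 0, cgfDensity l η := mq_one_one l
    _ ≤ ∫ η in Set.Ioi 0, (max (√|l| ^ 2 - η ^ 2) 0 + exp (-(η - √|l|) ^ 2)) :=
        setIntegral_mono_on (integrableOn_cgfDensity l) (integrableOn_cgfDensity_majorant _)
          measurableSet_Ioi fun η hη => cgfDensity_le l (le_of_lt hη)
    _ = 2 / 3 * √|l| ^ 3 + ∫ η in Set.Ioi 0, exp (-(η - √|l|) ^ 2) := by
        rw [integral_add (integrableOn_Ioi_max_sq_sub_sq _)
          (integrable_exp_neg_sq.comp_sub_right _).integrableOn,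
          integral_Ioi_max_sq_sub_sq (sqrt_nonneg _)]
    _ ≤ 2 / 3 * √|l| ^ 3 + √π := by gcongr

lemma le_mq_one_one (l : ℝ) {T : ℝ} (hT : 0 ≤ T) :
    |l| * T - (((T + 1) ^ 3 - 1) / 3 + log (2 * √π) * T) ≤ mq 1 1 l := by
  calc |l| * T - (((T + 1) ^ 3 - 1) / 3 + log (2 * √π) * T)
      = ∫ η in (0 : ℝ)..T, (|l| - log (2 * √π) - (η + 1) ^ 2) := by
        rw [intervalIntegral.integral_sub (by simp)
          (Continuous.intervalIntegrable (by fun_prop) _ _),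
          intervalIntegral.integral_comp_add_right (fun x : ℝ => x ^ 2)]
        simp only [intervalIntegral.integral_const, integral_pow, smul_eq_mul]
        ring
    _ = ∫ η in Set.Ioc 0 T, (|l| - log (2 * √π) - (η + 1) ^ 2) :=
        intervalIntegral.integral_of_le hT
    _ ≤ ∫ η in Set.Ioc 0 T, cgfDensity l η :=
        setIntegral_mono_on (Continuous.integrableOn_Ioc (by fun_prop))
          ((integrableOn_cgfDensity l).mono_set Set.Ioc_subset_Ioi_self) measurableSet_Ioc
          fun η hη => le_cgfDensity l hη.1.le
    _ ≤ ∫ η in Set.Ioi 0, cgfDensity l η :=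
        setIntegral_mono_set (integrableOn_cgfDensity l) (ae_of_all _ (cgfDensity_nonneg l))
          Set.Ioc_subset_Ioi_self.eventuallyLE
    _ = mq 1 1 l := (mq_one_one l).symm

end CumulantGeneratingFunction

section LargeDeviationFunction

lemma φq_eq_mul_φq_one_one {ρ σ : ℝ} (hρ : 0 < ρ) (hσ : 0 < σ) (ξ : ℝ) :
    φq ρ σ ξ = ρ * σ * φq 1 1 (ξ / σ) := by
  calc φq ρ σ ξ = ⨆ l : ℝ, ρ * σ * (l / ρ * (ξ / σ) - mq 1 1 (l / ρ)) := by
        refine iSup_congr fun l => ?_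
        rw [mq_eq_mul_mq_one_one ρ σ]
        field_simp
    _ = ⨆ k : ℝ, ρ * σ * (k * (ξ / σ) - mq 1 1 k) :=
        (Equiv.divRight₀ ρ hρ.ne').iSup_comp (g := fun k => ρ * σ * (k * (ξ / σ) - mq 1 1 k))
    _ = ρ * σ * φq 1 1 (ξ / σ) := (Real.mul_iSup_of_nonneg (mul_pos hρ hσ).le _).symm

lemma mul_sub_mq_one_one_le {x : ℝ} (hx : 0 ≤ x) (l : ℝ) :
    l * x - mq 1 1 l ≤ ((x + 1) ^ 3 - 1) / 3 + log (2 * √π) * x := by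
  linarith [le_mq_one_one l hx, mul_le_mul_of_nonneg_right (le_abs_self l) hx]

lemma φq_one_one_le {x : ℝ} (hx : 0 ≤ x) :
    φq 1 1 x ≤ ((x + 1) ^ 3 - 1) / 3 + log (2 * √π) * x :=
  ciSup_le (mul_sub_mq_one_one_le hx)

-- The maximiser of `l * x - 2 / 3 * l ^ (3 / 2)` is `l = x ^ 2`.
lemma le_φq_one_one {x : ℝ} (hx : 0 ≤ x) : x ^ 3 / 3 - √π ≤ φq 1 1 x := by
  have bdd : BddAbove (Set.range fun l => l * x - mq 1 1 l) :=
    ⟨_, Set.forall_mem_range.2 (mul_sub_mq_one_one_le hx)⟩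
  have mq_le := mq_one_one_le (x ^ 2)
  rw [abs_sq, sqrt_sq hx] at mq_le
  calc x ^ 3 / 3 - √π ≤ x ^ 2 * x - mq 1 1 (x ^ 2) := by linarith
    _ ≤ φq 1 1 x := le_ciSup bdd (x ^ 2)

lemma tendsto_φq_one_one_div_pow_three :
    Tendsto (fun x => φq 1 1 x / x ^ 3) atTop (𝓝 (1 / 3)) := by
  refine tendsto_of_tendsto_of_tendsto_of_le_of_le'
    (tendsto_cubic_div_pow_three (1 / 3) 0 0 (-√π))
    (tendsto_cubic_div_pow_three (1 / 3) 1 (1 + log (2 * √π)) 0) ?_ ?_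
  all_goals
    filter_upwards [eventually_ge_atTop 0] with x hx
    refine div_le_div_of_nonneg_right ?_ (pow_nonneg hx 3)
  · linarith [le_φq_one_one hx]
  · linarith [φq_one_one_le hx]

end LargeDeviationFunction

/-- `lim_{ξ→∞} φ_q(ξ)/ξ³ = ρ/(3σ²)`. -/
theorem quenched_ldf_tail (ρ σ : ℝ) (hρ : 0 < ρ) (hσ : 0 < σ) :
    Tendsto (fun ξ : ℝ => φq ρ σ ξ / ξ ^ 3) atTop (nhds (ρ / (3 * σ ^ 2))) := by
  have unscaled : Tendsto (fun ξ => ρ / σ ^ 2 * (φq 1 1 (ξ / σ) / (ξ / σ) ^ 3)) atTop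
      (𝓝 (ρ / σ ^ 2 * (1 / 3))) :=
    (tendsto_φq_one_one_div_pow_three.comp (tendsto_id.atTop_div_const hσ)).const_mul _
  convert unscaled using 2 with ξ
  · rw [φq_eq_mul_φq_one_one hρ hσ]
    field_simp
  · field_simp
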